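/- arXiv:math/9903192 — 2 statements merged into one kernel-verified Lean document; each statement's English description precedes it below -/
import Mathlib

section
/- Let D be a minimal Enriques diagram with exactly one root R. Let S be a vertex of D and let V and W be successors of S. Then: (i) m_R ≥ m_S ≥ m_V; (ii) if m_S = m_V, then W is either a successor of V or a predecessor of V, and in the latter case m_W = m_V and V is not remotely proximate to W; (iii) if m_S = 1 and V is a leaf, then m_V = 1 and V is remotely proximate to some proper predecessor of S. -/
open Classical Finset

/-- The raw data of a finite weighted forest equipped with a proximity relation.
The vertices are the elements of `Fin n`; `parent v` is the immediate predecessor of `v`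
(`none` iff `v` is a root); `wt v` is the weight of `v`; and `prox a b` means
that `a` is proximate to `b`. -/
structure PreDiagram where
  n : ℕ
  parent : Fin n → Option (Fin n)
  wt : Fin n → ℕ
  prox : Fin n → Fin n → Prop

namespace PreDiagram

variable (D : PreDiagram)

/-- `a` is the immediate predecessor of `b`. -/
def ImPred (a b : Fin D.n) : Prop := D.parent b = some a

/-- `a` is a predecessor of `b` (reflexive-transitive closure of `ImPred`). -/
def Pred (a b : Fin D.n) : Prop := Relation.ReflTransGen D.ImPred a b

/-- `a` is a proper predecessor of `b`. -/
def ProperPred (a b : Fin D.n) : Prop := Relation.TransGen D.ImPred a b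

/-- `a` is a remote predecessor of `b`: a proper but not immediate predecessor. -/
def RemotePred (a b : Fin D.n) : Prop := D.ProperPred a b ∧ ¬ D.ImPred a b

def IsRoot (v : Fin D.n) : Prop := D.parent v = none

/-- A leaf is a vertex with no proper successor. -/
def IsLeaf (v : Fin D.n) : Prop := ∀ w, ¬ D.ImPred v w

/-- `a` is remotely proximate to `b`: proximate to `b`, and `b` is a remote predecessor. -/
def RemoteProx (a b : Fin D.n) : Prop := D.prox a b ∧ D.RemotePred b a

/-- A satellite is a vertex proximate to a remote predecessor. -/
def IsSatellite (v : Fin D.n) : Prop := ∃ t, D.RemoteProx v t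

/-- A free vertex is one that is not a satellite. -/
def IsFree (v : Fin D.n) : Prop := ¬ D.IsSatellite v

/-- The laws of a minimal Enriques diagram. -/
structure IsMED : Prop where
  /-- The graph is a forest: no vertex is a proper predecessor of itself. -/
  forest : ∀ v, ¬ D.ProperPred v v
  /-- Every weight is at least `1`. -/
  wt_pos : ∀ v, 1 ≤ D.wt v
  /-- Law of Proximity: a root is proximate to no vertex. -/
  root_not_prox : ∀ v, D.IsRoot v → ∀ w, ¬ D.prox v w
  /-- Law of Proximity: a non-root is proximate to its immediate predecessor. -/
  prox_parent : ∀ v u, D.parent v = some u → D.prox v u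
  /-- Law of Proximity: any other vertex a non-root is proximate to is a remote predecessor. -/
  prox_remote : ∀ v u w, D.parent v = some u → D.prox v w → w ≠ u → D.RemotePred w v
  /-- Law of Proximity: a non-root is proximate to at most one vertex other than its
  immediate predecessor. -/
  prox_unique : ∀ v u w w', D.parent v = some u → D.prox v w → D.prox v w' →
      w ≠ u → w' ≠ u → w = w'
  /-- Law of Proximity: if `a` is proximate to `b` and `c` lies properly between them,
  then `c` is proximate to `b`. -/
  prox_between : ∀ a b c, D.prox a b → D.ProperPred b c → D.ProperPred c a → D.prox c b
  /-- Proximity Inequality. -/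
  prox_ineq : ∀ v, ∑ w ∈ univ.filter (fun w => D.prox w v), D.wt w ≤ D.wt v
  /-- Law of Succession: a vertex `v` has at most `wt v` immediate successors. -/
  succ_card : ∀ v, (univ.filter (fun w => D.ImPred v w)).card ≤ D.wt v
  /-- Law of Succession: at most two immediate successors are satellites. -/
  succ_sat : ∀ v w₁ w₂ w₃, D.ImPred v w₁ → D.ImPred v w₂ → D.ImPred v w₃ →
      D.IsSatellite w₁ → D.IsSatellite w₂ → D.IsSatellite w₃ →
      w₁ ≠ w₂ → w₁ ≠ w₃ → w₂ ≠ w₃ → False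
  /-- Law of Succession: two distinct immediate successors of the same vertex cannot be
  satellites of the same vertex. -/
  succ_sat_diff : ∀ v w₁ w₂ t, D.ImPred v w₁ → D.ImPred v w₂ → w₁ ≠ w₂ →
      D.RemoteProx w₁ t → D.RemoteProx w₂ t → False
  /-- Law of Minimality: every leaf of weight `1` is a satellite. -/
  minimal : ∀ v, D.IsLeaf v → D.wt v = 1 → D.IsSatellite v

/-- The number of roots. -/
noncomputable def rts : ℕ := (univ.filter (fun v => D.IsRoot v)).card

/-- The number of free vertices. -/
noncomputable def frs : ℕ := (univ.filter (fun v => D.IsFree v)).card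

/-- `dim D = rts D + frs D`. -/
noncomputable def dimD : ℕ := D.rts + D.frs

/-- `deg D = Σ_V C(m_V + 1, 2)`. -/
def degD : ℕ := ∑ v, (D.wt v + 1).choose 2

/-- `cod D = deg D - dim D`. -/
noncomputable def cod : ℤ := (D.degD : ℤ) - (D.dimD : ℤ)

/-- `δ(D) = Σ_V C(m_V, 2)`. -/
def deltaD : ℕ := ∑ v, (D.wt v).choose 2

/-- `r(D) = Σ_V (m_V - Σ_{W ≻ V} m_W)`. -/
noncomputable def rCh : ℤ :=
  ∑ v, ((D.wt v : ℤ) - ∑ w ∈ univ.filter (fun w => D.prox w v), (D.wt w : ℤ))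

/-- `μ(D) = 2 δ(D) - r(D) + rts D`. -/
noncomputable def mu : ℤ := 2 * (D.deltaD : ℤ) - D.rCh + (D.rts : ℤ)

/-- An isomorphism of diagrams: a weight-preserving bijection of the vertices preserving
the immediate-predecessor and proximity relations. -/
structure Iso (D₁ D₂ : PreDiagram) where
  toEquiv : Fin D₁.n ≃ Fin D₂.n
  wt_eq : ∀ v, D₂.wt (toEquiv v) = D₁.wt v
  imPred_iff : ∀ a b, D₂.ImPred (toEquiv a) (toEquiv b) ↔ D₁.ImPred a b
  prox_iff : ∀ a b, D₂.prox (toEquiv a) (toEquiv b) ↔ D₁.prox a b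

def Isomorphic (D₁ D₂ : PreDiagram) : Prop := Nonempty (Iso D₁ D₂)

/-- A realization of `D'` as a subdiagram of `D`: an injection of the vertices such that
the weight of a vertex of `D'` is at most its weight in `D`, and the succession
(predecessor) and proximity relations of `D'` are the ones induced from `D`. -/
structure Subdiagram (D' D : PreDiagram) where
  toFun : Fin D'.n → Fin D.n
  inj : Function.Injective toFun
  wt_le : ∀ v, D'.wt v ≤ D.wt (toFun v)
  pred_iff : ∀ a b, D'.Pred a b ↔ D.Pred (toFun a) (toFun b)
  prox_iff : ∀ a b, D'.prox a b ↔ D.prox (toFun a) (toFun b)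

def IsSubdiagram (D' D : PreDiagram) : Prop := Nonempty (Subdiagram D' D)

/-- The parent function of a chain `0 → 1 → ⋯ → n-1`. -/
def chainParent (n : ℕ) (v : Fin n) : Option (Fin n) :=
  if v.val = 0 then none
  else some ⟨v.val - 1, lt_of_le_of_lt (Nat.sub_le _ _) v.isLt⟩

/-- The diagram `A_k` (`k ≥ 1`): for `k = 2i-1`, a chain of `i` free vertices of weight `2`;
for `k = 2i`, such a chain followed by a chain of two vertices of weight `1`, both
proximate to the `i`-th weight-`2` vertex. -/
def diagA (k : ℕ) : PreDiagram where
  n := if k % 2 = 0 then k / 2 + 2 else (k + 1) / 2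
  parent := chainParent _
  wt := fun v => if v.val < (k + 1) / 2 then 2 else 1
  prox := fun a b => a.val = b.val + 1 ∨
    (k % 2 = 0 ∧ a.val = k / 2 + 1 ∧ b.val + 1 = k / 2)

/-- The diagram `D_k` (`k ≥ 4`): a root of weight `3`, followed by nothing if `k = 4`,
by two vertices of weight `1` both proximate to the root if `k = 5`, and by the diagram
`A_{k-5}` if `k ≥ 6`. -/
def diagD (k : ℕ) : PreDiagram where
  n := (k - 4) / 2 + (if k % 2 = 0 then 1 else 3)
  parent := chainParent _
  wt := fun v => if v.val = 0 then 3 else if v.val ≤ (k - 4) / 2 then 2 else 1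
  prox := fun a b => a.val = b.val + 1 ∨
    (k % 2 = 1 ∧ a.val = (k - 4) / 2 + 2 ∧ b.val = (k - 4) / 2)

/-- The diagram `E_{6l+j}` (`l ≥ 1`, `j ∈ {0,1,2}`), with argument `m = 6l + j`. -/
def diagE (m : ℕ) : PreDiagram where
  n := m / 6 + (if m % 6 = 1 then 2 else 3)
  parent := chainParent _
  wt := fun v => if v.val < m / 6 then 3 else
    if 1 ≤ m % 6 ∧ v.val = m / 6 then 2 else 1
  prox := fun a b => a.val = b.val + 1 ∨
    (m % 6 = 0 ∧ (a.val = m / 6 + 1 ∨ a.val = m / 6 + 2) ∧ b.val + 1 = m / 6) ∨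
    (m % 6 = 1 ∧ a.val = m / 6 + 1 ∧ b.val + 1 = m / 6) ∨
    (m % 6 = 2 ∧ ((a.val = m / 6 + 1 ∧ b.val + 1 = m / 6) ∨
                  (a.val = m / 6 + 2 ∧ b.val = m / 6)))

/-- The diagram `J_{l,k}` (`l ≥ 2`, `k ≥ 0`): a chain of `l - 1` free vertices of weight `3`
followed by the diagram `D_{k+4}`. -/
def diagJ (l k : ℕ) : PreDiagram where
  n := (l - 1) + k / 2 + (if k % 2 = 0 then 1 else 3)
  parent := chainParent _
  wt := fun v => if v.val ≤ l - 1 then 3 else if v.val ≤ l - 1 + k / 2 then 2 else 1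
  prox := fun a b => a.val = b.val + 1 ∨
    (k % 2 = 1 ∧ a.val = (l - 1) + k / 2 + 2 ∧ b.val = (l - 1) + k / 2)

/-- The diagram `X_{1,0}`: a single root of weight `4`. -/
def diagX10 : PreDiagram where
  n := 1
  parent := chainParent _
  wt := fun _ => 4
  prox := fun a b => a.val = b.val + 1

/-- The diagram `X_{1,1}`: a root of weight `4` followed by a chain of two vertices of
weight `1`, both proximate to the root. -/
def diagX11 : PreDiagram where
  n := 3
  parent := chainParent _
  wt := fun v => if v.val = 0 then 4 else 1
  prox := fun a b => a.val = b.val + 1 ∨ (a.val = 2 ∧ b.val = 0)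

/-- The diagram `X_{1,2}`: a root of weight `4` followed by one free vertex of weight `2`. -/
def diagX12 : PreDiagram where
  n := 2
  parent := chainParent _
  wt := fun v => if v.val = 0 then 4 else 2
  prox := fun a b => a.val = b.val + 1

/-- The diagram `Z_{11}`: a root of weight `4` followed by a chain of three vertices of
weight `1`, all proximate to the root. -/
def diagZ11 : PreDiagram where
  n := 4
  parent := chainParent _
  wt := fun v => if v.val = 0 then 4 else 1
  prox := fun a b => a.val = b.val + 1 ∨ ((a.val = 2 ∨ a.val = 3) ∧ b.val = 0)

/-- The diagram `Y_{1,1}`: a root of weight `4` with two immediate free successors of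
weight `1`, each of which has one immediate successor of weight `1` that is remotely
proximate to the root. -/
def diagY11 : PreDiagram where
  n := 5
  parent := fun v =>
    if v.val = 0 then none
    else if v.val ≤ 2 then some ⟨0, by omega⟩
    else if v.val = 3 then some ⟨1, by omega⟩
    else some ⟨2, by omega⟩
  wt := fun v => if v.val = 0 then 4 else 1
  prox := fun a b => (a.val = 1 ∧ b.val = 0) ∨ (a.val = 2 ∧ b.val = 0) ∨
    (a.val = 3 ∧ (b.val = 1 ∨ b.val = 0)) ∨ (a.val = 4 ∧ (b.val = 2 ∨ b.val = 0))

/-- The disjoint union of two diagrams. -/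
def disjUnion (D₁ D₂ : PreDiagram) : PreDiagram where
  n := D₁.n + D₂.n
  parent := fun v =>
    if h : v.val < D₁.n then
      (D₁.parent ⟨v.val, h⟩).map
        (fun w => ⟨w.val, Nat.lt_of_lt_of_le w.isLt (Nat.le_add_right _ _)⟩)
    else
      (D₂.parent ⟨v.val - D₁.n, by have := v.isLt; omega⟩).map
        (fun w => ⟨D₁.n + w.val, by have := w.isLt; omega⟩)
  wt := fun v =>
    if h : v.val < D₁.n then D₁.wt ⟨v.val, h⟩
    else D₂.wt ⟨v.val - D₁.n, by have := v.isLt; omega⟩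
  prox := fun a b =>
    (∃ (ha : a.val < D₁.n) (hb : b.val < D₁.n), D₁.prox ⟨a.val, ha⟩ ⟨b.val, hb⟩) ∨
    (∃ (_ : D₁.n ≤ a.val) (_ : D₁.n ≤ b.val),
      D₂.prox ⟨a.val - D₁.n, by have := a.isLt; omega⟩
              ⟨b.val - D₁.n, by have := b.isLt; omega⟩)

end PreDiagram

/-
Every vertex has positive weight, so the Proximity Inequality at a vertex `a` forces weights to
decrease weakly along proximity, and, once some `b` proximate to `a` has the full weight of `a`,
leaves no room for any other vertex proximate to `a`. Applied to immediate successors, this says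
that the vertices between `S` and `V` do not branch when `m_S = m_V`. Applied to a remote proximity
of `V` to `W`, where the vertex following `W` on the way to `V` is also proximate to `W`, it rules
out `m_W = m_V`. Hence in (iii) the vertex to which the satellite `V` is remotely proximate cannot
be a successor of `S`; being comparable with `S`, like any predecessor of `V`, it is a proper
predecessor of `S`.
-/

namespace PreDiagram

variable {D : PreDiagram} {a b c r S V W t : Fin D.n}

theorem ProperPred.pred (h : D.ProperPred a b) : D.Pred a b :=
  h.to_reflTransGen

theorem Pred.eq_or_properPred (h : D.Pred a b) : b = a ∨ D.ProperPred a b :=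
  Relation.reflTransGen_iff_eq_or_transGen.1 h

theorem ProperPred.exists_imPred_pred (h : D.ProperPred a b) :
    ∃ c, D.ImPred a c ∧ D.Pred c b :=
  Relation.TransGen.head'_iff.1 h

theorem Pred.total_of_pred (ha : D.Pred a c) (hb : D.Pred b c) : D.Pred a b ∨ D.Pred b a := by
  have parent_unique : Relator.RightUnique (Function.swap D.ImPred) :=
    fun _ _ _ h h' => Option.some.inj (h.symm.trans h')
  have hswap := Relation.ReflTransGen.total_of_right_unique parent_unique ha.swap hb.swap
  simpa only [Pred, Relation.reflTransGen_swap, or_comm] using hswap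

namespace IsMED

theorem wellFounded_properPred (hD : D.IsMED) : WellFounded D.ProperPred :=
  have : IsTrans (Fin D.n) D.ProperPred := ⟨fun _ _ _ => Relation.TransGen.trans⟩
  have : Std.Irrefl D.ProperPred := ⟨hD.forest⟩
  Finite.wellFounded_of_trans_of_irrefl D.ProperPred

theorem exists_isRoot_pred (hD : D.IsMED) (v : Fin D.n) : ∃ r, D.IsRoot r ∧ D.Pred r v := by
  induction v using hD.wellFounded_properPred.induction with
  | _ v ih =>
    rcases hv : D.parent v with _ | u
    · exact ⟨v, hv, .refl⟩
    · obtain ⟨r, hr, hru⟩ := ih u (.single hv)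
      exact ⟨r, hr, hru.tail hv⟩

theorem pred_of_isRoot_unique (hD : D.IsMED) (hr : ∀ v, D.IsRoot v → v = r) (v : Fin D.n) :
    D.Pred r v := by
  obtain ⟨s, hs, hsv⟩ := hD.exists_isRoot_pred v
  exact hr s hs ▸ hsv

theorem wt_le_of_prox (hD : D.IsMED) (h : D.prox b a) : D.wt b ≤ D.wt a :=
  (single_le_sum_of_canonicallyOrdered (mem_filter_univ b |>.2 h)).trans (hD.prox_ineq a)

theorem eq_of_prox_of_wt_eq (hD : D.IsMED) (hb : D.prox b a) (hab : D.wt a = D.wt b)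
    (hc : D.prox c a) : c = b := by
  by_contra hcb
  have hlt : D.wt b < ∑ w ∈ univ.filter (fun w => D.prox w a), D.wt w :=
    single_lt_sum hcb (mem_filter_univ b |>.2 hb) (mem_filter_univ c |>.2 hc) (hD.wt_pos c)
      fun _ _ _ => Nat.zero_le _
  exact (hlt.trans_le (hD.prox_ineq a)).ne' hab

theorem wt_le_of_imPred (hD : D.IsMED) (h : D.ImPred a b) : D.wt b ≤ D.wt a :=
  hD.wt_le_of_prox (hD.prox_parent b a h)

theorem wt_le_of_pred (hD : D.IsMED) (h : D.Pred a b) : D.wt b ≤ D.wt a := by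
  induction h with
  | refl => exact le_rfl
  | tail _ hbc ih => exact (hD.wt_le_of_imPred hbc).trans ih

theorem wt_eq_of_pred_of_pred (hD : D.IsMED) (hab : D.Pred a b) (hbc : D.Pred b c)
    (hac : D.wt a = D.wt c) : D.wt b = D.wt c :=
  ((hD.wt_le_of_pred hab).trans_eq hac).antisymm (hD.wt_le_of_pred hbc)

theorem pred_total_of_wt_eq (hD : D.IsMED) (hV : D.Pred S V) (hW : D.Pred S W)
    (hSV : D.wt S = D.wt V) : D.Pred V W ∨ D.Pred W V := by
  unfold Pred at hV
  induction hV using Relation.ReflTransGen.head_induction_on with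
  | refl => exact .inl hW
  | @head a c hac hcV ih =>
    rcases hW.cases_head with rfl | ⟨d, had, hdW⟩
    · exact .inr (hcV.head hac)
    · have hcV_wt : D.wt c = D.wt V := hD.wt_eq_of_pred_of_pred (.single hac) hcV hSV
      have hdc : d = c := hD.eq_of_prox_of_wt_eq (hD.prox_parent c a hac)
        (hSV.trans hcV_wt.symm) (hD.prox_parent d a had)
      exact ih (hdc ▸ hdW) hcV_wt

theorem not_remoteProx_of_wt_eq (hD : D.IsMED) (hWV : D.wt W = D.wt V) :
    ¬ D.RemoteProx V W := by
  rintro ⟨hprox, hproper, hnot_imPred⟩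
  obtain ⟨c, hWc, -⟩ := hproper.exists_imPred_pred
  have hcV : c = V := hD.eq_of_prox_of_wt_eq hprox hWV (hD.prox_parent c W hWc)
  exact hnot_imPred (hcV ▸ hWc)

theorem properPred_of_remoteProx_of_wt_eq (hD : D.IsMED) (hV : D.Pred S V)
    (hSV : D.wt S = D.wt V) (ht : D.RemoteProx V t) : D.ProperPred t S := by
  have htV : D.Pred t V := ht.2.1.pred
  have hSt : ¬ D.Pred S t := fun h =>
    hD.not_remoteProx_of_wt_eq (hD.wt_eq_of_pred_of_pred h htV hSV) ht
  have htS : D.Pred t S := (htV.total_of_pred hV).resolve_right hSt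
  exact htS.eq_or_properPred.resolve_left fun h => hSt (h ▸ .refl)

end IsMED

end PreDiagram

open PreDiagram in
theorem statement0_general (D : PreDiagram) (hD : D.IsMED) (R S V W : Fin D.n)
    (hS : D.Pred R S) (hV : D.Pred S V) (hW : D.Pred S W) :
    (D.wt S ≤ D.wt R ∧ D.wt V ≤ D.wt S) ∧
    (D.wt S = D.wt V →
      (D.Pred V W ∨ D.Pred W V) ∧
      (D.Pred W V → D.wt W = D.wt V ∧ ¬ D.RemoteProx V W)) ∧
    (D.wt S = 1 → D.IsLeaf V →
      D.wt V = 1 ∧ ∃ t, D.RemoteProx V t ∧ D.ProperPred t S) := by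
  have hVS : D.wt V ≤ D.wt S := hD.wt_le_of_pred hV
  refine ⟨⟨hD.wt_le_of_pred hS, hVS⟩, fun hSV => ⟨hD.pred_total_of_wt_eq hV hW hSV, ?_⟩, ?_⟩
  · intro hWV
    have hwt : D.wt W = D.wt V := hD.wt_eq_of_pred_of_pred hW hWV hSV
    exact ⟨hwt, hD.not_remoteProx_of_wt_eq hwt⟩
  · intro hS_one hleaf
    have hV_one : D.wt V = 1 := (hVS.trans_eq hS_one).antisymm (hD.wt_pos V)
    obtain ⟨t, ht⟩ := hD.minimal V hleaf hV_one
    exact ⟨hV_one, t, ht,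
      hD.properPred_of_remoteProx_of_wt_eq hV (hS_one.trans hV_one.symm) ht⟩

open PreDiagram Finset in
/-- Lemma (2.1): in a minimal Enriques diagram with exactly one root `R`, for a vertex `S`
and successors `V`, `W` of `S`: (i) `m_R ≥ m_S ≥ m_V`; (ii) if `m_S = m_V` then `W` is a
successor or a predecessor of `V`, and in the latter case `m_W = m_V` and `V` is not
remotely proximate to `W`; (iii) if `m_S = 1` and `V` is a leaf, then `m_V = 1` and `V` is
remotely proximate to some proper predecessor of `S`. -/
theorem statement0 (D : PreDiagram) (hD : D.IsMED) (R : Fin D.n)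
    (hR : D.IsRoot R) (huniq : ∀ v, D.IsRoot v → v = R)
    (S V W : Fin D.n) (hV : D.Pred S V) (hW : D.Pred S W) :
    (D.wt S ≤ D.wt R ∧ D.wt V ≤ D.wt S) ∧
    (D.wt S = D.wt V →
      (D.Pred V W ∨ D.Pred W V) ∧
      (D.Pred W V → D.wt W = D.wt V ∧ ¬ D.RemoteProx V W)) ∧
    (D.wt S = 1 → D.IsLeaf V →
      D.wt V = 1 ∧ ∃ t, D.RemoteProx V t ∧ D.ProperPred t S) :=
  statement0_general D hD R S V W (hD.pred_of_isRoot_unique huniq S) hV hW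
end

section
/- Let D be a minimal Enriques diagram with exactly one root R. If m_R = 3, then D is isomorphic to the diagram D_k for some k ≥ 4, or to the diagram E_{6l+j} for some l ≥ 1 and j ∈ {0,1,2}, or to the diagram J_{l,k} for some l ≥ 2 and k ≥ 0. -/
open Classical Finset

/-!
Weights do not increase along succession, so below a root of weight `3` they are at most `3`. Below
a vertex of weight `1` lies a leaf of weight `1`, which by minimality is remotely proximate to some
`t`, and all vertices between the two are proximate to `t` as well. Their weights add up to at most
`3`; this leaves no room for branching, so the diagram is a chain.

On the chain the weights read `3, …, 3, 2, …, 2, 1, …, 1`, and a satellite has weight `1` and comes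
two or three steps after the vertex it is remotely proximate to. If the last weight is at least `2`,
there are no satellites and the diagram is `J_{l,k}` with `k` even. Otherwise the last vertex is a
satellite of some `t`, and the weight of the vertex after `t`, together with the question whether
that vertex is itself a satellite, separates `E_{6l}`, `E_{6l+1}`, `E_{6l+2}` and `J_{l,k}` with
`k` odd. Here `l` is the number of vertices of weight `3`, and `D_k` appears as `J_{1,k-4}`.
-/

namespace PreDiagram

variable {D : PreDiagram}

theorem leftUnique_imPred : Relator.LeftUnique D.ImPred :=
  fun _ _ _ h h' => Option.some.inj (h.symm.trans h')

theorem Pred.total {a b c : Fin D.n} (ha : D.Pred a c) (hb : D.Pred b c) :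
    D.Pred a b ∨ D.Pred b a := by
  have := Relation.ReflTransGen.total_of_right_unique
    (fun _ _ _ h h' => leftUnique_imPred h h' : Relator.RightUnique (Function.swap D.ImPred))
    (Relation.reflTransGen_swap.2 ha) (Relation.reflTransGen_swap.2 hb)
  exact this.symm.imp Relation.reflTransGen_swap.1 Relation.reflTransGen_swap.1

theorem ProperPred.pred_of_imPred {t u v : Fin D.n} (htv : D.ProperPred t v)
    (huv : D.ImPred u v) : D.Pred t u := by
  obtain ⟨u', htu', hu'v⟩ := Relation.TransGen.tail'_iff.1 htv
  rwa [leftUnique_imPred huv hu'v]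

/-- A generalization of minimal Enriques diagrams, to which the classification applies: there is no
Law of Succession, and a vertex may be proximate to several remote predecessors. The first two
clauses of the Law of Proximity are merged into `prox_properPred`. -/
structure IsMinimalProximityForest (D : PreDiagram) : Prop where
  forest : ∀ v, ¬ D.ProperPred v v
  wt_pos : ∀ v, 1 ≤ D.wt v
  prox_properPred : ∀ v w, D.prox v w → D.ProperPred w v
  prox_of_imPred : ∀ u v, D.ImPred u v → D.prox v u
  prox_between : ∀ a b c, D.prox a b → D.ProperPred b c → D.ProperPred c a → D.prox c b
  prox_ineq : ∀ v, ∑ w ∈ univ.filter (fun w => D.prox w v), D.wt w ≤ D.wt v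
  minimal : ∀ v, D.IsLeaf v → D.wt v = 1 → D.IsSatellite v

theorem IsMED.isMinimalProximityForest (hD : D.IsMED) : D.IsMinimalProximityForest where
  forest := hD.forest
  wt_pos := hD.wt_pos
  prox_properPred v w h := by
    cases hv : D.parent v with
    | none => exact absurd h (hD.root_not_prox v hv w)
    | some u =>
      by_cases hw : w = u
      · exact .single (hw ▸ hv)
      · exact (hD.prox_remote v u w hv h hw).1
  prox_of_imPred u v h := hD.prox_parent v u h
  prox_between := hD.prox_between
  prox_ineq := hD.prox_ineq
  minimal := hD.minimal

namespace IsMinimalProximityForest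

theorem ne_of_properPred (hD : D.IsMinimalProximityForest) {a b : Fin D.n}
    (h : D.ProperPred a b) : a ≠ b := by
  rintro rfl
  exact hD.forest a h

theorem ne_of_imPred (hD : D.IsMinimalProximityForest) {a b : Fin D.n} (h : D.ImPred a b) :
    a ≠ b :=
  hD.ne_of_properPred (.single h)

theorem wellFounded_properPred (hD : D.IsMinimalProximityForest) : WellFounded D.ProperPred :=
  have : IsTrans (Fin D.n) D.ProperPred := ⟨fun _ _ _ => Relation.TransGen.trans⟩
  have : Std.Irrefl D.ProperPred := ⟨hD.forest⟩
  Finite.wellFounded_of_trans_of_irrefl _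

theorem wellFounded_swap_properPred (hD : D.IsMinimalProximityForest) :
    WellFounded (Function.swap D.ProperPred) :=
  have : IsTrans (Fin D.n) (Function.swap D.ProperPred) := ⟨fun _ _ _ h h' => h'.trans h⟩
  have : Std.Irrefl (Function.swap D.ProperPred) := ⟨hD.forest⟩
  Finite.wellFounded_of_trans_of_irrefl _

theorem exists_isRoot_pred (hD : D.IsMinimalProximityForest) (v : Fin D.n) :
    ∃ r, D.IsRoot r ∧ D.Pred r v := by
  induction v using hD.wellFounded_properPred.induction with
  | _ v ih =>
    cases hv : D.parent v with
    | none => exact ⟨v, hv, .refl⟩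
    | some u =>
      obtain ⟨r, hr, hru⟩ := ih u (.single hv)
      exact ⟨r, hr, hru.tail hv⟩

theorem exists_pred_isLeaf (hD : D.IsMinimalProximityForest) (v : Fin D.n) :
    ∃ w, D.Pred v w ∧ D.IsLeaf w := by
  induction v using hD.wellFounded_swap_properPred.induction with
  | _ v ih =>
    by_cases hv : D.IsLeaf v
    · exact ⟨v, .refl, hv⟩
    · obtain ⟨c, hc⟩ : ∃ c, D.ImPred v c := by simpa [IsLeaf] using hv
      obtain ⟨w, hcw, hw⟩ := ih c (.single hc)
      exact ⟨w, .head hc hcw, hw⟩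

theorem sum_wt_le_of_prox (hD : D.IsMinimalProximityForest) {v : Fin D.n}
    {S : Finset (Fin D.n)} (hS : ∀ x ∈ S, D.prox x v) : ∑ x ∈ S, D.wt x ≤ D.wt v :=
  (Finset.sum_le_sum_of_subset fun x hx => by simpa using hS x hx).trans (hD.prox_ineq v)

theorem wt_add_wt_le_of_prox (hD : D.IsMinimalProximityForest) {v a b : Fin D.n}
    (ha : D.prox a v) (hb : D.prox b v) (hab : a ≠ b) : D.wt a + D.wt b ≤ D.wt v := by
  simpa [Finset.sum_pair hab] using hD.sum_wt_le_of_prox (S := {a, b}) (by simp [ha, hb])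

theorem wt_le_of_pred (hD : D.IsMinimalProximityForest) {a b : Fin D.n} (h : D.Pred a b) :
    D.wt b ≤ D.wt a := by
  induction h with
  | refl => exact le_rfl
  | tail _ h ih =>
    have := hD.sum_wt_le_of_prox (S := {_}) (by simpa using hD.prox_of_imPred _ _ h)
    exact le_trans (by simpa using this) ih

theorem prox_of_pred (hD : D.IsMinimalProximityForest) {a b c : Fin D.n} (h : D.prox a b)
    (hbc : D.ProperPred b c) (hca : D.Pred c a) : D.prox c b := by
  rcases Relation.reflTransGen_iff_eq_or_transGen.1 hca with rfl | hca
  · exact h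
  · exact hD.prox_between a b c h hbc hca

theorem two_mul_wt_le_of_remoteProx (hD : D.IsMinimalProximityForest) {a b : Fin D.n}
    (h : D.RemoteProx a b) : 2 * D.wt a ≤ D.wt b := by
  obtain ⟨hab, hba, hnot⟩ := h
  obtain ⟨c, hbc, hca⟩ := Relation.TransGen.head'_iff.1 hba
  have hsum := hD.wt_add_wt_le_of_prox (hD.prox_of_imPred b c hbc) hab
    (fun e => hnot (e ▸ hbc))
  have := hD.wt_le_of_pred hca
  omega

theorem exists_remoteProx_of_wt_eq_one (hD : D.IsMinimalProximityForest) {v : Fin D.n}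
    (hv : D.wt v = 1) : ∃ t w, D.ProperPred t v ∧ D.Pred v w ∧ D.RemoteProx w t := by
  obtain ⟨w, hvw, hleaf⟩ := hD.exists_pred_isLeaf v
  have hw : D.wt w = 1 := le_antisymm (hv ▸ hD.wt_le_of_pred hvw) (hD.wt_pos w)
  obtain ⟨t, hwt⟩ := hD.minimal w hleaf hw
  have ht : 2 * D.wt w ≤ D.wt t := hD.two_mul_wt_le_of_remoteProx hwt
  have hnot : ¬ D.Pred v t := fun h => by
    have := hD.wt_le_of_pred h
    omega
  have htv : D.Pred t v := (Pred.total hwt.2.1.to_reflTransGen hvw).resolve_right hnot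
  refine ⟨t, w, ?_, hvw, hwt⟩
  exact (Relation.reflTransGen_iff_eq_or_transGen.1 htv).resolve_left
    (fun e => hnot (e ▸ .refl))

theorem exists_prox_of_imPred_of_wt_eq_one (hD : D.IsMinimalProximityForest)
    (h3 : ∀ v, D.wt v ≤ 3) {u v : Fin D.n} (huv : D.ImPred u v) (hv : D.wt v = 1)
    (hu : 2 ≤ D.wt u) :
    (∃ c, D.ImPred v c ∧ D.prox c u) ∨ (D.wt u = 2 ∧ ∃ t, D.ImPred t u ∧ D.prox v t) := by
  obtain ⟨t, w, htv, hvw, hwt⟩ := hD.exists_remoteProx_of_wt_eq_one hv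
  rcases Relation.reflTransGen_iff_eq_or_transGen.1 (htv.pred_of_imPred huv) with rfl | htu
  · left
    have hne : w ≠ v := fun e => hwt.2.2 (e ▸ huv)
    obtain ⟨c, hvc, hcw⟩ := Relation.TransGen.head'_iff.1
      ((Relation.reflTransGen_iff_eq_or_transGen.1 hvw).resolve_left hne)
    exact ⟨c, hvc, hD.prox_of_pred hwt.1 (htv.tail hvc) hcw⟩
  · right
    have hvt : D.prox v t := hD.prox_of_pred hwt.1 htv hvw
    have hut : D.prox u t := hD.prox_of_pred hvt htu (.single huv)
    have hsum := hD.wt_add_wt_le_of_prox hut hvt (hD.ne_of_imPred huv)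
    have ht3 := h3 t
    refine ⟨by omega, t, ?_, hvt⟩
    by_contra hnot
    have := hD.two_mul_wt_le_of_remoteProx ⟨hut, htu, hnot⟩
    omega

theorem ne_of_imPred_of_imPred (hD : D.IsMinimalProximityForest) {u v v' c : Fin D.n}
    (hv : D.ImPred u v) (hv' : D.ImPred u v') (hc : D.ImPred v c) : c ≠ v' := by
  rintro rfl
  exact hD.ne_of_imPred hv (leftUnique_imPred hv' hc)

theorem wt_add_wt_add_wt_le_of_prox (hD : D.IsMinimalProximityForest) {v a b c : Fin D.n}
    (ha : D.prox a v) (hb : D.prox b v) (hc : D.prox c v) (hab : a ≠ b) (hac : a ≠ c)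
    (hbc : b ≠ c) : D.wt a + D.wt b + D.wt c ≤ D.wt v := by
  simpa [Finset.sum_insert, hab, hac, hbc, add_assoc] using
    hD.sum_wt_le_of_prox (S := {a, b, c}) (by simp [ha, hb, hc])

theorem card_le_wt_of_prox (hD : D.IsMinimalProximityForest) {v : Fin D.n}
    {S : Finset (Fin D.n)} (hS : ∀ x ∈ S, D.prox x v) : #S ≤ D.wt v :=
  (Finset.card_nsmul_le_sum S D.wt 1 fun x _ => hD.wt_pos x).trans' (by simp)
    |>.trans (hD.sum_wt_le_of_prox hS)

theorem wt_add_wt_add_wt_le_of_nephew (hD : D.IsMinimalProximityForest) {u v v' c : Fin D.n}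
    (hv : D.ImPred u v) (hv' : D.ImPred u v') (hne : v ≠ v') (hc : D.ImPred v c)
    (hcu : D.prox c u) : D.wt v + D.wt v' + D.wt c ≤ D.wt u :=
  hD.wt_add_wt_add_wt_le_of_prox (hD.prox_of_imPred u v hv) (hD.prox_of_imPred u v' hv') hcu hne
    (hD.ne_of_imPred hc) (hD.ne_of_imPred_of_imPred hv hv' hc).symm

theorem four_le_wt_of_nephews (hD : D.IsMinimalProximityForest) {u v v' c c' : Fin D.n}
    (hv : D.ImPred u v) (hv' : D.ImPred u v') (hne : v ≠ v') (hc : D.ImPred v c)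
    (hc' : D.ImPred v' c') (hcu : D.prox c u) (hcu' : D.prox c' u) : 4 ≤ D.wt u := by
  have hcc' : c ≠ c' := fun e => hne (leftUnique_imPred (e ▸ hc) hc')
  have hcard : #{v, v', c, c'} = 4 := by
    simp [hne, hD.ne_of_imPred hc, hD.ne_of_imPred hc', hcc',
      (hD.ne_of_imPred_of_imPred hv hv' hc).symm, (hD.ne_of_imPred_of_imPred hv' hv hc').symm]
  rw [← hcard]
  exact hD.card_le_wt_of_prox
    (by simp [hD.prox_of_imPred u v hv, hD.prox_of_imPred u v' hv', hcu, hcu'])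

/- By the Proximity Inequality at `u`, one of two children of `u` has weight `1`, so that a vertex
below it is a satellite; as weights are at most `3`, this forces weight `1` on the other child
too, and the two satellites then overload `u` or the immediate predecessor of `u`. -/
theorem rightUnique_imPred (hD : D.IsMinimalProximityForest) (h3 : ∀ v, D.wt v ≤ 3) :
    Relator.RightUnique D.ImPred := by
  intro u v v' hv hv'
  by_contra hne
  wlog hw : D.wt v = 1 generalizing v v'
  · have hpair := hD.wt_add_wt_le_of_prox (hD.prox_of_imPred u v hv)
      (hD.prox_of_imPred u v' hv') hne
    have hpos := hD.wt_pos v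
    have hpos' := hD.wt_pos v'
    have hu3 := h3 u
    exact this hv' hv (Ne.symm hne) (by omega)
  have hpair := hD.wt_add_wt_le_of_prox (hD.prox_of_imPred u v hv) (hD.prox_of_imPred u v' hv') hne
  have hpos' := hD.wt_pos v'
  have hu3 := h3 u
  rcases hD.exists_prox_of_imPred_of_wt_eq_one h3 hv hw (by omega) with
    ⟨c, hc, hcu⟩ | ⟨hu2, t, htu, hvt⟩
  · have hsum := hD.wt_add_wt_add_wt_le_of_nephew hv hv' hne hc hcu
    have hposc := hD.wt_pos c
    rcases hD.exists_prox_of_imPred_of_wt_eq_one h3 hv' (by omega) (by omega) with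
      ⟨c', hc', hcu'⟩ | ⟨hu2, -⟩
    · have := hD.four_le_wt_of_nephews hv hv' hne hc hc' hcu hcu'
      omega
    · omega
  · rcases hD.exists_prox_of_imPred_of_wt_eq_one h3 hv' (by omega) (by omega) with
      ⟨c', hc', hcu'⟩ | ⟨-, t', htu', hvt'⟩
    · have := hD.wt_add_wt_add_wt_le_of_nephew hv' hv (Ne.symm hne) hc' hcu'
      have := hD.wt_pos c'
      omega
    · obtain rfl := leftUnique_imPred htu htu'
      have := hD.wt_add_wt_add_wt_le_of_prox (hD.prox_of_imPred t u htu) hvt hvt'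
        (hD.ne_of_imPred hv) (hD.ne_of_imPred hv') hne
      have := h3 t
      omega

end IsMinimalProximityForest

theorem chainParent_eq_some_iff {n : ℕ} {v u : Fin n} :
    chainParent n v = some u ↔ v.val = u.val + 1 := by
  simp only [chainParent, Fin.ext_iff, Option.ite_none_left_eq_some, Option.some.injEq]
  omega

theorem exists_forall_lt_iff_le_of_antitoneOn {α : Type*} [Preorder α] {w : ℕ → α} {N : ℕ}
    (hw : AntitoneOn w (Set.Iic N)) (c : α) : ∃ l ≤ N + 1, ∀ i ≤ N, i < l ↔ c ≤ w i := by
  have hex : ∃ l, l ≤ N → ¬ c ≤ w l := ⟨N + 1, by omega⟩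
  refine ⟨Nat.find hex, Nat.find_min' hex (by omega), fun i hi => ⟨fun h => ?_, fun h => ?_⟩⟩
  · have := Nat.find_min hex h
    push Not at this
    exact this.2
  · by_contra! hle
    have hl : Nat.find hex ≤ N := hle.trans hi
    exact Nat.find_spec hex hl (h.trans (hw hl hi hle))

/-- `f 0, …, f N` lists all vertices of `D`, each the immediate predecessor of the next: the
diagram is a single chain. The values of `f` beyond `N` are junk. -/
structure IsChainEnumeration (D : PreDiagram) (N : ℕ) (f : ℕ → Fin D.n) : Prop where
  imPred_succ : ∀ i < N, D.ImPred (f i) (f (i + 1))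
  exists_eq : ∀ v, ∃ i ≤ N, f i = v

theorem wt_diagJ {l k : ℕ} (v : Fin (diagJ l k).n) :
    (diagJ l k).wt v = if v.val ≤ l - 1 then 3 else if v.val ≤ l - 1 + k / 2 then 2 else 1 :=
  rfl

theorem wt_diagE {m : ℕ} (v : Fin (diagE m).n) :
    (diagE m).wt v = if v.val < m / 6 then 3 else if 1 ≤ m % 6 ∧ v.val = m / 6 then 2 else 1 :=
  rfl

theorem exists_path_of_reflTransGen {α : Type*} {r : α → α → Prop} {a b : α}
    (h : Relation.ReflTransGen r a b) :
    ∃ (N : ℕ) (f : ℕ → α), f 0 = a ∧ f N = b ∧ ∀ i < N, r (f i) (f (i + 1)) := by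
  induction h using Relation.ReflTransGen.head_induction_on with
  | refl => exact ⟨0, fun _ => b, rfl, rfl, by simp⟩
  | @head a c hac _ ih =>
    obtain ⟨N, f, rfl, hN, hf⟩ := ih
    refine ⟨N + 1, fun i => Nat.casesOn i a f, rfl, hN, ?_⟩
    rintro (_ | i) hi
    · exact hac
    · exact hf i (Nat.succ_lt_succ_iff.1 hi)

theorem IsMinimalProximityForest.exists_isChainEnumeration (hD : D.IsMinimalProximityForest)
    (h3 : ∀ v, D.wt v ≤ 3) {R : Fin D.n} (hR : ∀ v, D.Pred R v) :
    ∃ N f, D.IsChainEnumeration N f ∧ f 0 = R := by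
  obtain ⟨w, hRw, hw⟩ := hD.exists_pred_isLeaf R
  obtain ⟨N, f, hf0, rfl, hf⟩ := exists_path_of_reflTransGen hRw
  refine ⟨N, f, ⟨hf, fun v => ?_⟩, hf0⟩
  induction hR v with
  | refl => exact ⟨0, Nat.zero_le N, hf0⟩
  | tail _ huv ih =>
    obtain ⟨i, hi, rfl⟩ := ih
    rcases hi.eq_or_lt with rfl | hi
    · exact absurd huv (hw _)
    · exact ⟨i + 1, hi, hD.rightUnique_imPred h3 (hf i hi) huv⟩

namespace IsChainEnumeration

variable {N : ℕ} {f : ℕ → Fin D.n}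

theorem properPred_of_lt (hf : D.IsChainEnumeration N f) {i j : ℕ} (hij : i < j) (hj : j ≤ N) :
    D.ProperPred (f i) (f j) := by
  induction j, hij using Nat.le_induction with
  | base => exact .single (hf.imPred_succ i hj)
  | succ j _ ih => exact (ih (by omega)).tail (hf.imPred_succ j hj)

theorem properPred_iff (hD : D.IsMinimalProximityForest) (hf : D.IsChainEnumeration N f)
    {i j : ℕ} (hi : i ≤ N) (hj : j ≤ N) : D.ProperPred (f i) (f j) ↔ i < j := by
  refine ⟨fun h => ?_, fun h => hf.properPred_of_lt h hj⟩
  by_contra! hji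
  rcases hji.eq_or_lt with rfl | hji
  · exact hD.forest _ h
  · exact hD.forest _ (h.trans (hf.properPred_of_lt hji hi))

theorem injOn (hD : D.IsMinimalProximityForest) (hf : D.IsChainEnumeration N f) :
    Set.InjOn f (Set.Iic N) := by
  intro i hi j hj hij
  by_contra hne
  rcases Nat.lt_or_gt_of_ne hne with h | h
  · exact hD.ne_of_properPred (hf.properPred_of_lt h hj) hij
  · exact hD.ne_of_properPred (hf.properPred_of_lt h hi) hij.symm

theorem imPred_iff (hD : D.IsMinimalProximityForest) (hf : D.IsChainEnumeration N f)
    {i j : ℕ} (hi : i ≤ N) (hj : j ≤ N) : D.ImPred (f i) (f j) ↔ j = i + 1 := by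
  constructor
  · intro h
    obtain ⟨k, rfl⟩ := Nat.exists_eq_add_of_lt ((hf.properPred_iff hD hi hj).1 (.single h))
    have hik : i = i + k := hf.injOn hD hi (Set.mem_Iic.2 (by omega))
      (leftUnique_imPred h (hf.imPred_succ (i + k) hj))
    omega
  · rintro rfl
    exact hf.imPred_succ i hj

theorem isLeaf_last (hD : D.IsMinimalProximityForest) (hf : D.IsChainEnumeration N f) :
    D.IsLeaf (f N) := by
  intro v hv
  obtain ⟨i, hi, rfl⟩ := hf.exists_eq v
  have := (hf.imPred_iff hD le_rfl hi).1 hv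
  omega

theorem isomorphic (hD : D.IsMinimalProximityForest) (hf : D.IsChainEnumeration N f)
    {E : PreDiagram} (hn : E.n = N + 1) (hparent : E.parent = chainParent E.n)
    (hwt : ∀ v : Fin E.n, E.wt v = D.wt (f v))
    (hprox : ∀ a b : Fin E.n, E.prox a b ↔ D.prox (f a) (f b)) : Isomorphic D E := by
  have hle (i : Fin E.n) : i.val ≤ N := by omega
  have hbij : Function.Bijective fun i : Fin E.n => f i := by
    refine ⟨fun i j h => Fin.ext (hf.injOn hD (hle i) (hle j) h), fun v => ?_⟩
    obtain ⟨i, hi, rfl⟩ := hf.exists_eq v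
    exact ⟨⟨i, by omega⟩, rfl⟩
  let e := Equiv.ofBijective _ hbij
  refine ⟨⟨e.symm, fun v => ?_, fun a b => ?_, fun a b => ?_⟩⟩
  · obtain ⟨i, rfl⟩ := e.surjective v
    simp [e, hwt]
  · obtain ⟨i, rfl⟩ := e.surjective a
    obtain ⟨j, rfl⟩ := e.surjective b
    have hE : E.ImPred i j ↔ j.val = i.val + 1 := by
      rw [ImPred, hparent, chainParent_eq_some_iff]
    simp [e, hE, hf.imPred_iff hD (hle i) (hle j)]
  · obtain ⟨i, rfl⟩ := e.surjective a
    obtain ⟨j, rfl⟩ := e.surjective b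
    simp [e, hprox]

theorem antitoneOn_wt (hD : D.IsMinimalProximityForest) (hf : D.IsChainEnumeration N f) :
    AntitoneOn (fun i => D.wt (f i)) (Set.Iic N) := by
  intro i _ j hj hij
  rcases hij.eq_or_lt with rfl | hij
  · exact le_rfl
  · exact hD.wt_le_of_pred (hf.properPred_of_lt hij hj).to_reflTransGen

theorem prox_succ (hD : D.IsMinimalProximityForest) (hf : D.IsChainEnumeration N f) {i : ℕ}
    (hi : i < N) : D.prox (f (i + 1)) (f i) :=
  hD.prox_of_imPred _ _ (hf.imPred_succ i hi)

theorem lt_of_prox (hD : D.IsMinimalProximityForest) (hf : D.IsChainEnumeration N f) {a b : ℕ}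
    (ha : a ≤ N) (hb : b ≤ N) (h : D.prox (f a) (f b)) : b < a :=
  (hf.properPred_iff hD hb ha).1 (hD.prox_properPred _ _ h)

theorem prox_of_prox_of_le (hD : D.IsMinimalProximityForest) (hf : D.IsChainEnumeration N f)
    {a b c : ℕ} (ha : a ≤ N) (h : D.prox (f a) (f b)) (hbc : b < c) (hca : c ≤ a) :
    D.prox (f c) (f b) := by
  rcases hca.eq_or_lt with rfl | hca
  · exact h
  · exact hD.prox_between _ _ _ h (hf.properPred_of_lt hbc (by omega))
      (hf.properPred_of_lt hca ha)

theorem remoteProx_iff (hD : D.IsMinimalProximityForest) (hf : D.IsChainEnumeration N f)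
    {a b : ℕ} (ha : a ≤ N) (hb : b ≤ N) :
    D.RemoteProx (f a) (f b) ↔ D.prox (f a) (f b) ∧ b + 2 ≤ a := by
  rw [RemoteProx, RemotePred, hf.properPred_iff hD hb ha, hf.imPred_iff hD hb ha]
  refine and_congr_right fun _ => ?_
  omega

theorem sum_wt_Ioc_le_of_prox (hD : D.IsMinimalProximityForest) (hf : D.IsChainEnumeration N f)
    {a b : ℕ} (ha : a ≤ N) (h : D.prox (f a) (f b)) :
    ∑ i ∈ Ioc b a, D.wt (f i) ≤ D.wt (f b) := by
  have hinj : Set.InjOn f (Ioc b a) := (hf.injOn hD).mono fun i hi =>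
    (Finset.mem_Ioc.1 hi).2.trans ha
  rw [← Finset.sum_image hinj]
  refine hD.sum_wt_le_of_prox fun x hx => ?_
  obtain ⟨i, hi, rfl⟩ := Finset.mem_image.1 hx
  obtain ⟨hbi, hia⟩ := Finset.mem_Ioc.1 hi
  exact hf.prox_of_prox_of_le hD ha h hbi hia

theorem exists_prox_last (hD : D.IsMinimalProximityForest) (hf : D.IsChainEnumeration N f)
    (hN : D.wt (f N) = 1) : ∃ t, t + 2 ≤ N ∧ D.prox (f N) (f t) := by
  obtain ⟨v, hv⟩ := hD.minimal _ (hf.isLeaf_last hD) hN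
  obtain ⟨t, ht, rfl⟩ := hf.exists_eq v
  obtain ⟨hprox, hle⟩ := (hf.remoteProx_iff hD le_rfl ht).1 hv
  exact ⟨t, hle, hprox⟩

theorem wt_of_remote_prox (hD : D.IsMinimalProximityForest) (hf : D.IsChainEnumeration N f)
    (h3 : ∀ v, D.wt v ≤ 3) {a b : ℕ} (ha : a ≤ N) (h : D.prox (f a) (f b)) (hba : b + 2 ≤ a) :
    D.wt (f a) = 1 ∧ (a = b + 2 ∧ D.wt (f (b + 1)) < D.wt (f b) ∨
      a = b + 3 ∧ D.wt (f (b + 1)) = 1 ∧ D.wt (f b) = 3) := by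
  have hsum := hf.sum_wt_Ioc_le_of_prox hD ha h
  have hpos (i : ℕ) := hD.wt_pos (f i)
  have hanti : D.wt (f a) ≤ D.wt (f (b + 1)) :=
    hf.antitoneOn_wt hD (Set.mem_Iic.2 (by omega)) ha (by omega)
  have hcard : a - b ≤ 3 := by
    calc a - b = ∑ i ∈ Ioc b a, 1 := by simp
      _ ≤ ∑ i ∈ Ioc b a, D.wt (f i) := Finset.sum_le_sum fun i _ => hpos i
      _ ≤ 3 := hsum.trans (h3 _)
  have hb3 := h3 (f b)
  have hpos1 := hpos (b + 1)
  have hpos2 := hpos (b + 2)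
  have hpos3 := hpos (b + 3)
  obtain rfl | rfl : a = b + 2 ∨ a = b + 3 := by omega
  · have : D.wt (f (b + 1)) + D.wt (f (b + 2)) ≤ D.wt (f b) := by
      simpa [Finset.sum_Ioc_succ_top] using hsum
    omega
  · have : D.wt (f (b + 1)) + D.wt (f (b + 2)) + D.wt (f (b + 3)) ≤ D.wt (f b) := by
      simpa [Finset.sum_Ioc_succ_top] using hsum
    omega

theorem eq_of_remote_prox (hD : D.IsMinimalProximityForest) (hf : D.IsChainEnumeration N f)
    (h3 : ∀ v, D.wt v ≤ 3) {a b c : ℕ} (ha : a ≤ N) (hb : D.prox (f a) (f b)) (hba : b + 2 ≤ a)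
    (hc : D.prox (f a) (f c)) (hca : c + 2 ≤ a) : b = c := by
  have hwb := hf.wt_of_remote_prox hD h3 ha hb hba
  have hwc := hf.wt_of_remote_prox hD h3 ha hc hca
  by_contra! hne
  wlog hlt : b < c generalizing b c
  · exact this hc hca hb hba hwc hwb hne.symm (by omega)
  obtain rfl : c = b + 1 := by omega
  have := hD.wt_pos (f (b + 1 + 1))
  omega

theorem prox_iff_of_two_le_wt (hD : D.IsMinimalProximityForest) (hf : D.IsChainEnumeration N f)
    (h3 : ∀ v, D.wt v ≤ 3) {a b : ℕ} (ha : a ≤ N) (hb : b ≤ N) (hw : 2 ≤ D.wt (f a)) :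
    D.prox (f a) (f b) ↔ a = b + 1 := by
  constructor
  · intro h
    have hba := hf.lt_of_prox hD ha hb h
    by_contra hne
    have := (hf.wt_of_remote_prox hD h3 ha h (by omega)).1
    omega
  · rintro rfl
    exact hf.prox_succ hD (by omega)

theorem prox_iff_of_prox_last (hD : D.IsMinimalProximityForest) (hf : D.IsChainEnumeration N f)
    (h3 : ∀ v, D.wt v ≤ 3) {t : ℕ} (ht : t + 2 ≤ N) (hprox : D.prox (f N) (f t)) {a b : ℕ}
    (ha : a ≤ N) (hb : b ≤ N) :
    D.prox (f a) (f b) ↔ a = b + 1 ∨ (t + 2 ≤ a ∧ b = t) ∨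
      (a = t + 1 ∧ b + 1 = t ∧ D.prox (f (t + 1)) (f b)) := by
  have hlast := hf.wt_of_remote_prox hD h3 le_rfl hprox ht
  have hpos := hD.wt_pos (f (t + 1))
  constructor
  · intro h
    rcases (Nat.succ_le_of_lt (hf.lt_of_prox hD ha hb h)).eq_or_lt with hab | hab
    · exact .inl hab.symm
    have hwa := hf.wt_of_remote_prox hD h3 ha h hab
    right
    rcases lt_trichotomy a (t + 1) with hat | rfl | hat
    · have : D.wt (f t) ≤ D.wt (f a) := hf.antitoneOn_wt hD ha (Set.mem_Iic.2 (by omega))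
        (by omega)
      omega
    · rcases hwa with ⟨-, ⟨hb, -⟩ | ⟨hb, hw, -⟩⟩
      · exact .inr ⟨rfl, by omega, h⟩
      · have : D.wt (f t) ≤ D.wt (f (b + 1)) := hf.antitoneOn_wt hD
          (Set.mem_Iic.2 (by omega)) (Set.mem_Iic.2 (by omega)) (by omega)
        omega
    · have hta := hf.prox_of_prox_of_le hD le_rfl hprox (by omega) ha
      exact .inl ⟨hat, hf.eq_of_remote_prox hD h3 ha h hab hta hat⟩
  · rintro (rfl | ⟨hta, rfl⟩ | ⟨rfl, -, h⟩)
    · exact hf.prox_succ hD (by omega)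
    · exact hf.prox_of_prox_of_le hD le_rfl hprox (by omega) ha
    · exact h

theorem isomorphic_diagJ (hD : D.IsMinimalProximityForest) (hf : D.IsChainEnumeration N f)
    (h3 : ∀ v, D.wt v ≤ 3) {l m e : ℕ} (hl : 1 ≤ l) (he : e ≤ 1) (hN : N + 1 = l + m + 2 * e)
    (hw3 : ∀ i ≤ N, i < l ↔ 3 ≤ D.wt (f i)) (hw2 : ∀ i ≤ N, i < l + m ↔ 2 ≤ D.wt (f i))
    (hprox : ∀ a b, a ≤ N → b ≤ N →
      (D.prox (f a) (f b) ↔ a = b + 1 ∨ e = 1 ∧ a = l + m + 1 ∧ b + 1 = l + m)) :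
    Isomorphic D (diagJ l (2 * m + e)) := by
  have hdiv : (2 * m + e) / 2 = m := by omega
  have hmod : (2 * m + e) % 2 = e := by omega
  have hn : (diagJ l (2 * m + e)).n = N + 1 := by
    simp only [diagJ, hdiv, hmod]
    split_ifs <;> omega
  refine hf.isomorphic hD hn rfl (fun v => ?_) fun a b => ?_
  · have hv : v.val ≤ N := by omega
    have := h3 (f v)
    have := hD.wt_pos (f v)
    have hv3 := hw3 v hv
    have hv2 := hw2 v hv
    rw [wt_diagJ, hdiv]
    split_ifs <;> omega
  · rw [hprox a b (by omega) (by omega)]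
    simp only [diagJ, hdiv, hmod]
    omega

theorem isomorphic_diagE (hD : D.IsMinimalProximityForest) (hf : D.IsChainEnumeration N f)
    (h3 : ∀ v, D.wt v ≤ 3) {l j : ℕ} (hj : j ≤ 2) (hN : N + 1 = l + if j = 1 then 2 else 3)
    (hw3 : ∀ i ≤ N, i < l ↔ 3 ≤ D.wt (f i))
    (hw2 : ∀ i ≤ N, i < (if j = 0 then l else l + 1) ↔ 2 ≤ D.wt (f i))
    (hprox : ∀ a b, a ≤ N → b ≤ N → (D.prox (f a) (f b) ↔ a = b + 1 ∨
      (j = 0 ∧ (a = l + 1 ∨ a = l + 2) ∧ b + 1 = l) ∨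
      (j = 1 ∧ a = l + 1 ∧ b + 1 = l) ∨
      (j = 2 ∧ ((a = l + 1 ∧ b + 1 = l) ∨ (a = l + 2 ∧ b = l))))) :
    Isomorphic D (diagE (6 * l + j)) := by
  have hdiv : (6 * l + j) / 6 = l := by omega
  have hmod : (6 * l + j) % 6 = j := by omega
  have hn : (diagE (6 * l + j)).n = N + 1 := by
    simp only [diagE, hdiv, hmod, hN]
  refine hf.isomorphic hD hn rfl (fun v => ?_) fun a b => ?_
  · have hv : v.val ≤ N := by omega
    have := h3 (f v)
    have := hD.wt_pos (f v)
    have hv3 := hw3 v hv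
    have hv2 := hw2 v hv
    rw [wt_diagE, hdiv, hmod]
    split_ifs at hv2 ⊢ <;> omega
  · rw [hprox a b (by omega) (by omega)]
    simp only [diagE, hdiv, hmod]

theorem isomorphic_diagJ_of_two_le_wt_last (hD : D.IsMinimalProximityForest)
    (hf : D.IsChainEnumeration N f) (h3 : ∀ v, D.wt v ≤ 3) {l m : ℕ} (hl : 1 ≤ l)
    (hlm : l + m ≤ N + 1) (hw3 : ∀ i ≤ N, i < l ↔ 3 ≤ D.wt (f i))
    (hw2 : ∀ i ≤ N, i < l + m ↔ 2 ≤ D.wt (f i)) (hN : 2 ≤ D.wt (f N)) :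
    Isomorphic D (diagJ l (2 * m)) := by
  have hlast : N < l + m := (hw2 N le_rfl).2 hN
  refine hf.isomorphic_diagJ hD h3 hl zero_le_one (by omega) hw3 hw2 fun a b ha hb => ?_
  rw [hf.prox_iff_of_two_le_wt hD h3 ha hb ((hw2 a ha).1 (by omega))]
  omega

theorem not_prox_of_wt_eq_three (hD : D.IsMinimalProximityForest)
    (hf : D.IsChainEnumeration N f) (h3 : ∀ v, D.wt v ≤ 3) {t b : ℕ} (ht : t + 1 ≤ N)
    (hwt : D.wt (f t) = 3) (hb : b + 1 = t) : ¬ D.prox (f (t + 1)) (f b) := by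
  intro h
  have := hf.wt_of_remote_prox hD h3 ht h (by omega)
  have := h3 (f b)
  subst hb
  omega

theorem isomorphic_diagE_zero (hD : D.IsMinimalProximityForest)
    (hf : D.IsChainEnumeration N f) (h3 : ∀ v, D.wt v ≤ 3) {l m t : ℕ}
    (hw3 : ∀ i ≤ N, i < l ↔ 3 ≤ D.wt (f i)) (hw2 : ∀ i ≤ N, i < l + m ↔ 2 ≤ D.wt (f i))
    (hN : N = t + 3) (hprox : D.prox (f N) (f t)) : Isomorphic D (diagE (6 * l)) := by
  obtain ⟨hw1, hwt⟩ : D.wt (f (t + 1)) = 1 ∧ D.wt (f t) = 3 := by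
    have := hf.wt_of_remote_prox hD h3 le_rfl hprox (by omega)
    omega
  obtain rfl : l = t + 1 := by
    have := hw3 t (by omega)
    have := hw3 (t + 1) (by omega)
    omega
  obtain rfl : m = 0 := by
    have := hw2 (t + 1) (by omega)
    omega
  refine hf.isomorphic_diagE (j := 0) hD h3 (by omega) (by simp [hN]) hw3 (by simpa using hw2)
    fun a b ha hb => ?_
  rw [hf.prox_iff_of_prox_last hD h3 (by omega) hprox ha hb]
  have := hf.not_prox_of_wt_eq_three hD h3 (t := t) (b := b) (by omega) hwt
  grind

theorem isomorphic_diagE_one (hD : D.IsMinimalProximityForest)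
    (hf : D.IsChainEnumeration N f) (h3 : ∀ v, D.wt v ≤ 3) {l m t : ℕ}
    (hw3 : ∀ i ≤ N, i < l ↔ 3 ≤ D.wt (f i)) (hw2 : ∀ i ≤ N, i < l + m ↔ 2 ≤ D.wt (f i))
    (hN : N = t + 2) (hprox : D.prox (f N) (f t)) (hw : 2 ≤ D.wt (f (t + 1))) :
    Isomorphic D (diagE (6 * l + 1)) := by
  obtain ⟨hw1, hw, hwt⟩ : D.wt (f N) = 1 ∧ D.wt (f (t + 1)) = 2 ∧ D.wt (f t) = 3 := by
    have := hf.wt_of_remote_prox hD h3 le_rfl hprox (by omega)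
    have := h3 (f t)
    omega
  obtain rfl : l = t + 1 := by
    have := hw3 t (by omega)
    have := hw3 (t + 1) (by omega)
    omega
  obtain rfl : m = 1 := by
    have := hw2 (t + 1) (by omega)
    have := hw2 N le_rfl
    omega
  refine hf.isomorphic_diagE hD h3 (by omega) (by simp [hN]) hw3 (by simpa using hw2)
    fun a b ha hb => ?_
  rw [hf.prox_iff_of_prox_last hD h3 (by omega) hprox ha hb]
  have := hf.not_prox_of_wt_eq_three hD h3 (t := t) (b := b) (by omega) hwt
  grind

theorem isomorphic_diagE_two (hD : D.IsMinimalProximityForest)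
    (hf : D.IsChainEnumeration N f) (h3 : ∀ v, D.wt v ≤ 3) {l m b : ℕ}
    (hw3 : ∀ i ≤ N, i < l ↔ 3 ≤ D.wt (f i)) (hw2 : ∀ i ≤ N, i < l + m ↔ 2 ≤ D.wt (f i))
    (hN : N = b + 3) (hprox : D.prox (f N) (f (b + 1))) (hprox' : D.prox (f (b + 2)) (f b)) :
    Isomorphic D (diagE (6 * l + 2)) := by
  obtain ⟨hw, hwt, hwb⟩ : D.wt (f (b + 2)) = 1 ∧ D.wt (f (b + 1)) = 2 ∧ D.wt (f b) = 3 := by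
    have := hf.wt_of_remote_prox hD h3 (by omega) hprox' le_rfl
    have : D.wt (f (b + 2)) = 1 ∧ 2 ≤ D.wt (f (b + 1)) := by
      have := hf.wt_of_remote_prox hD h3 le_rfl hprox (by omega)
      have := hD.wt_pos (f (b + 1 + 1))
      omega
    have := h3 (f b)
    omega
  obtain rfl : l = b + 1 := by
    have := hw3 b (by omega)
    have := hw3 (b + 1) (by omega)
    omega
  obtain rfl : m = 1 := by
    have := hw2 (b + 1) (by omega)
    have := hw2 (b + 2) (by omega)
    omega
  refine hf.isomorphic_diagE hD h3 le_rfl (by simp [hN]) hw3 (by simpa using hw2)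
    fun a c ha hc => ?_
  rw [hf.prox_iff_of_prox_last hD h3 (by omega) hprox ha hc]
  grind

theorem isomorphic_diagJ_of_prox_last (hD : D.IsMinimalProximityForest)
    (hf : D.IsChainEnumeration N f) (h3 : ∀ v, D.wt v ≤ 3) {l m t : ℕ} (hl : 1 ≤ l)
    (hw3 : ∀ i ≤ N, i < l ↔ 3 ≤ D.wt (f i)) (hw2 : ∀ i ≤ N, i < l + m ↔ 2 ≤ D.wt (f i))
    (hN : N = t + 2) (hprox : D.prox (f N) (f t)) (hw : D.wt (f (t + 1)) = 1)
    (hnot : ∀ b, b + 1 = t → ¬ D.prox (f (t + 1)) (f b)) :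
    Isomorphic D (diagJ l (2 * m + 1)) := by
  have hwt : 2 ≤ D.wt (f t) := by
    have := hf.wt_of_remote_prox hD h3 le_rfl hprox (by omega)
    omega
  have hlm : l + m = t + 1 := by
    have := hw2 t (by omega)
    have := hw2 (t + 1) (by omega)
    omega
  refine hf.isomorphic_diagJ hD h3 hl le_rfl (by omega) hw3 hw2 fun a b ha hb => ?_
  rw [hf.prox_iff_of_prox_last hD h3 (by omega) hprox ha hb]
  have := hnot b
  grind

theorem exists_isomorphic_diagE_or_diagJ_of_wt_last (hD : D.IsMinimalProximityForest)
    (hf : D.IsChainEnumeration N f) (h3 : ∀ v, D.wt v ≤ 3) {l m : ℕ} (hl : 1 ≤ l)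
    (hw3 : ∀ i ≤ N, i < l ↔ 3 ≤ D.wt (f i)) (hw2 : ∀ i ≤ N, i < l + m ↔ 2 ≤ D.wt (f i))
    (hN : D.wt (f N) = 1) :
    (∃ j ≤ 2, Isomorphic D (diagE (6 * l + j))) ∨ ∃ k, Isomorphic D (diagJ l k) := by
  obtain ⟨t, ht, hprox⟩ := hf.exists_prox_last hD hN
  obtain hN | hN : N = t + 3 ∨ N = t + 2 := by
    have := hf.wt_of_remote_prox hD h3 le_rfl hprox ht
    omega
  · exact .inl ⟨0, by omega, hf.isomorphic_diagE_zero hD h3 hw3 hw2 hN hprox⟩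
  rcases (hD.wt_pos (f (t + 1))).eq_or_lt with hw | hw
  · by_cases h : ∃ b, b + 1 = t ∧ D.prox (f (t + 1)) (f b)
    · obtain ⟨b, rfl, hb⟩ := h
      exact .inl ⟨2, le_rfl, hf.isomorphic_diagE_two hD h3 hw3 hw2 hN hprox hb⟩
    · push Not at h
      exact .inr ⟨_, hf.isomorphic_diagJ_of_prox_last hD h3 hl hw3 hw2 hN hprox hw.symm h⟩
  · exact .inl ⟨1, by omega, hf.isomorphic_diagE_one hD h3 hw3 hw2 hN hprox hw⟩

theorem exists_isomorphic_diagE_or_diagJ (hD : D.IsMinimalProximityForest)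
    (hf : D.IsChainEnumeration N f) (h3 : ∀ v, D.wt v ≤ 3) (h0 : D.wt (f 0) = 3) :
    ∃ l ≥ 1, (∃ j ≤ 2, Isomorphic D (diagE (6 * l + j))) ∨ ∃ k, Isomorphic D (diagJ l k) := by
  obtain ⟨l, hlN, hw3⟩ := exists_forall_lt_iff_le_of_antitoneOn (hf.antitoneOn_wt hD) 3
  obtain ⟨s, hs, hw2⟩ := exists_forall_lt_iff_le_of_antitoneOn (hf.antitoneOn_wt hD) 2
  have hl : 1 ≤ l := (hw3 0 N.zero_le).2 h0.ge
  obtain ⟨m, rfl⟩ : ∃ m, s = l + m := by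
    refine Nat.exists_eq_add_of_le (not_lt.1 fun hsl => ?_)
    have := hw3 s (by omega)
    have := hw2 s (by omega)
    omega
  refine ⟨l, hl, ?_⟩
  rcases (hD.wt_pos (f N)).eq_or_lt with hN | hN
  · exact hf.exists_isomorphic_diagE_or_diagJ_of_wt_last hD h3 hl hw3 hw2 hN.symm
  · exact .inr ⟨_, hf.isomorphic_diagJ_of_two_le_wt_last hD h3 hl hs hw3 hw2 hN⟩

end IsChainEnumeration

theorem diagD_add_four (k : ℕ) : diagD (k + 4) = diagJ 1 k := by
  have hmod : (k + 4) % 2 = k % 2 := by omega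
  unfold diagD diagJ
  rw [Nat.add_sub_cancel, hmod, Nat.sub_self, Nat.zero_add]
  simp

end PreDiagram

open PreDiagram in
theorem statement3_general (D : PreDiagram) (hD : D.IsMinimalProximityForest) (R : Fin D.n)
    (huniq : ∀ v, D.IsRoot v → v = R) (hw : D.wt R = 3) :
    (∃ k, 4 ≤ k ∧ Isomorphic D (diagD k)) ∨
    (∃ l j, 1 ≤ l ∧ j ≤ 2 ∧ Isomorphic D (diagE (6 * l + j))) ∨
    (∃ l k, 2 ≤ l ∧ Isomorphic D (diagJ l k)) := by
  have hR (v : Fin D.n) : D.Pred R v := by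
    obtain ⟨r, hr, hrv⟩ := hD.exists_isRoot_pred v
    exact huniq r hr ▸ hrv
  have h3 (v : Fin D.n) : D.wt v ≤ 3 := hw ▸ hD.wt_le_of_pred (hR v)
  obtain ⟨N, f, hf, rfl⟩ := hD.exists_isChainEnumeration h3 hR
  obtain ⟨l, hl, ⟨j, hj, h⟩ | ⟨k, h⟩⟩ := hf.exists_isomorphic_diagE_or_diagJ hD h3 hw
  · exact .inr (.inl ⟨l, j, hl, hj, h⟩)
  · rcases hl.eq_or_lt with rfl | hl
    · exact .inl ⟨k + 4, by omega, diagD_add_four k ▸ h⟩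
    · exact .inr (.inr ⟨l, k, hl, h⟩)

open PreDiagram in
/-- A minimal Enriques diagram with exactly one root `R` of weight `3` is isomorphic to
`D_k` for some `k ≥ 4`, or to `E_{6l+j}` for some `l ≥ 1` and `j ∈ {0,1,2}`, or to
`J_{l,k}` for some `l ≥ 2` and `k ≥ 0`. -/
theorem statement3 (D : PreDiagram) (hD : D.IsMED) (R : Fin D.n)
    (hR : D.IsRoot R) (huniq : ∀ v, D.IsRoot v → v = R) (hw : D.wt R = 3) :
    (∃ k, 4 ≤ k ∧ Isomorphic D (diagD k)) ∨
    (∃ l j, 1 ≤ l ∧ j ≤ 2 ∧ Isomorphic D (diagE (6 * l + j))) ∨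
    (∃ l k, 2 ≤ l ∧ Isomorphic D (diagJ l k)) :=
  statement3_general D hD.isMinimalProximityForest R huniq hw
end
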